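/- Let n ≥ 0 be an integer and set c = 2n+5. For each pair (e,ℓ) ∈ {(0,0), (0,−1), (1,0), (1,−1), (1,1)}, the finite group G = Q_c^{(e,ℓ)} has a balanced presentation with generator rank 2 and relation rank 2: the group cohomology of G with coefficients in the trivial G-module F₃ = ℤ/3ℤ satisfies dim_{F₃} H¹(G, F₃) = 2 and dim_{F₃} H²(G, F₃) = 2. -/

import Mathlib

/-- The commutator `[g,h] = g⁻¹h⁻¹gh`. -/
def fcomm {G : Type*} [Group G] (g h : G) : G := g⁻¹ * h⁻¹ * g * h

namespace CoverLimitDef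

/-- The generators `a, t, u, y, z` of the cover limit, as words in the free group. -/
def awF : FreeGroup (Fin 5) := FreeGroup.of 0
def twF : FreeGroup (Fin 5) := FreeGroup.of 1
def uwF : FreeGroup (Fin 5) := FreeGroup.of 2
def ywF : FreeGroup (Fin 5) := FreeGroup.of 3
def zwF : FreeGroup (Fin 5) := FreeGroup.of 4

/-- The defining relators of the cover limit `C^(e)`:
`a⁻¹·t·a = u`, `(a⁻¹·u·a)·t·u·y = [u,t]^e`, `a³·[[t,a],t] = z`,
`[[u,t],t] = 1`, `[[u,t],u] = 1`, `y³ = 1`,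
`[a,y] = [t,y] = [u,y] = [z,y] = 1`, `z³ = 1`, `[t,z] = [u,z] = 1`. -/
def Crels (e : ℕ) : Set (FreeGroup (Fin 5)) :=
  {awF⁻¹ * twF * awF * uwF⁻¹,
   (awF⁻¹ * uwF * awF) * twF * uwF * ywF * (fcomm uwF twF ^ e)⁻¹,
   awF ^ 3 * fcomm (fcomm twF awF) twF * zwF⁻¹,
   fcomm (fcomm uwF twF) twF,
   fcomm (fcomm uwF twF) uwF,
   ywF ^ 3,
   fcomm awF ywF, fcomm twF ywF, fcomm uwF ywF, fcomm zwF ywF,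
   zwF ^ 3,
   fcomm twF zwF, fcomm uwF zwF}

/-- The cover limit group `C^(e)`. -/
abbrev CoverLimit (e : ℕ) : Type := PresentedGroup (Crels e)

/-- The images of the generators in `C^(e)`. -/
def aC (e : ℕ) : CoverLimit e := PresentedGroup.of 0
def tC (e : ℕ) : CoverLimit e := PresentedGroup.of 1
def uC (e : ℕ) : CoverLimit e := PresentedGroup.of 2
def yC (e : ℕ) : CoverLimit e := PresentedGroup.of 3
def zC (e : ℕ) : CoverLimit e := PresentedGroup.of 4

/-- The left-normed iterated commutator `[t,a,…,a]` with `k` copies of `a`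
(so `wC e (c−1)` is the element `w_c`). -/
def wC (e : ℕ) : ℕ → CoverLimit e
  | 0 => tC e
  | k + 1 => fcomm (wC e k) (aC e)

/-- The element `v_c = [w_{c−2}, [t,a]]` (note `w_{c−2} = wC e (c−3)`). -/
def vC (e c : ℕ) : CoverLimit e := fcomm (wC e (c - 3)) (fcomm (tC e) (aC e))

/-- The class-`c` quotient `Q_c^{(e,ℓ)}` of the cover limit `C^{(e)}`:
the quotient by the normal closure of `y·w_c^ℓ·v_c` and `z·w_c`. -/
abbrev Qgrp (c e : ℕ) (ℓ : ℤ) : Type :=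
  CoverLimit e ⧸ Subgroup.normalClosure
    {yC e * wC e (c - 1) ^ ℓ * vC e c, zC e * wC e (c - 1)}

end CoverLimitDef

open CoverLimitDef

/-!
The group `Q_c` is generated by `a` and `t` subject to the requirements that the words
`s = [u,t]`, `y` and `z` in `a` and `t` be central, that `y³ = z³ = 1`, and that
`y * w_c ^ ℓ * v_c = z * w_c = 1`. In a central extension of `Q_c` by `𝔽₃`, lifts of `s`, `y` and
`z` are central modulo a central subgroup of exponent `3`. Modulo the center, conjugation by `a`
acts on `⟨t³, u³⟩` like multiplication by a cube root of unity `ω` on `ℤ[ω]`, so that `[·, a]` is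
multiplication by `ω - 1`, with `(ω - 1)² = -3ω`. For odd `c` this makes `w_{c-2}` and `w_c`
explicit, and the last two relations alone force all the others. Hence two linear conditions on a
2-cocycle, the vanishing of the two relators in the extension it defines, make it a coboundary,
and `dim H² ≤ 2`. Conversely, the abelianization of `Q_c` is `(ℤ/3)²`, so no nonzero character
`Q_c → ℤ/3` lifts to `ℤ/9`; the Bockstein map `H¹ → H²` is injective and `dim H² ≥ dim H¹ = 2`.
-/

section Commutators

variable {G H : Type*} [Group G] [Group H] {x y g h : G}

theorem map_fcomm (φ : G →* H) (x y : G) : φ (fcomm x y) = fcomm (φ x) (φ y) := by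
  simp [fcomm]

theorem fcomm_eq_one_iff_commute : fcomm x y = 1 ↔ Commute x y := by
  rw [fcomm, mul_assoc, ← mul_inv_rev, inv_mul_eq_one, eq_comm, commute_iff_eq]

theorem fcomm_inv (x y : G) : (fcomm x y)⁻¹ = fcomm y x := by
  simp only [fcomm]; group

theorem inv_mul_mul_eq_mul_fcomm (x g : G) : g⁻¹ * x * g = x * fcomm x g := by
  simp only [fcomm]; group

theorem inv_mul_zpow_mul (x g : G) (n : ℤ) : g⁻¹ * x ^ n * g = (g⁻¹ * x * g) ^ n := by
  simpa using (conj_zpow (a := g⁻¹) (b := x) (i := n)).symm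

theorem inv_mul_pow_mul (x g : G) (n : ℕ) : g⁻¹ * x ^ n * g = (g⁻¹ * x * g) ^ n := by
  simpa using inv_mul_zpow_mul x g n

theorem inv_mul_mul_eq_of_commute (h : Commute x g) : g⁻¹ * x * g = x := by
  rw [mul_assoc, h.eq, inv_mul_cancel_left]

theorem commute_fcomm (hx : Commute g x) (hy : Commute g y) : Commute g (fcomm x y) :=
  ((hx.inv_right.mul_right hy.inv_right).mul_right hx).mul_right hy

theorem fcomm_mul_left (h : Commute (fcomm x g) y) :
    fcomm (x * y) g = fcomm x g * fcomm y g :=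
  calc fcomm (x * y) g = y⁻¹ * (fcomm x g * y) * fcomm y g := by simp only [fcomm]; group
    _ = fcomm x g * fcomm y g := by rw [h.eq, inv_mul_cancel_left]

theorem fcomm_mul_right (h : Commute (fcomm x g) y) :
    fcomm x (g * y) = fcomm x y * fcomm x g :=
  calc fcomm x (g * y) = fcomm x y * (y⁻¹ * (fcomm x g * y)) := by simp only [fcomm]; group
    _ = fcomm x y * fcomm x g := by rw [h.eq, inv_mul_cancel_left]

theorem fcomm_zpow_left (h : Commute (fcomm x g) x) (n : ℤ) :
    fcomm (x ^ n) g = fcomm x g ^ n := by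
  rw [← mul_right_inj (x ^ n), ← inv_mul_mul_eq_mul_fcomm, inv_mul_zpow_mul,
    inv_mul_mul_eq_mul_fcomm, h.symm.mul_zpow]

theorem fcomm_zpow_right (h : Commute (fcomm x g) g) (n : ℤ) :
    fcomm x (g ^ n) = fcomm x g ^ n := by
  rw [← inv_inj, fcomm_inv, fcomm_zpow_left, ← inv_zpow, fcomm_inv]
  rwa [← fcomm_inv, Commute.inv_left_iff]

theorem zpow_mul_mul_inv (h : Commute (fcomm g x) g) (n : ℤ) :
    g ^ n * x * (g ^ n)⁻¹ = x * fcomm g x ^ n := by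
  have hgx : Commute (fcomm x g) g := fcomm_inv g x ▸ h.inv_left
  calc g ^ n * x * (g ^ n)⁻¹ = (g ^ (-n))⁻¹ * x * g ^ (-n) := by rw [zpow_neg, inv_inv]
    _ = x * fcomm g x ^ n := by
      rw [inv_mul_mul_eq_mul_fcomm, fcomm_zpow_right hgx, ← fcomm_inv, inv_zpow', neg_neg]

theorem commute_of_mem_center (hx : x ∈ Subgroup.center G) (y : G) : Commute x y :=
  (Subgroup.mem_center_iff.1 hx y).symm

theorem mul_pow_eq_mul_fcomm_pow_choose {k : G} (h : fcomm k g ∈ Subgroup.center G) (n : ℕ) :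
    (g * k) ^ n = g ^ n * k ^ n * fcomm k g ^ n.choose 2 := by
  induction n with
  | zero => simp
  | succ n ih =>
    have hc (m : ℕ) (x : G) : Commute (fcomm k g ^ m) x := (commute_of_mem_center h x).pow_left m
    have hkg : k ^ n * g = g * k ^ n * fcomm k g ^ n := by
      have hpow := fcomm_zpow_left (commute_of_mem_center h k) n
      simp only [zpow_natCast] at hpow
      rw [← hpow, fcomm]
      group
    calc (g * k) ^ (n + 1) = g ^ n * k ^ n * (fcomm k g ^ n.choose 2 * (g * k)) := by
          rw [pow_succ, ih, mul_assoc]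
      _ = g ^ n * (k ^ n * g) * k * fcomm k g ^ n.choose 2 := by
          rw [(hc _ _).eq]; simp only [mul_assoc]
      _ = g ^ (n + 1) * k ^ n * (fcomm k g ^ n * k) * fcomm k g ^ n.choose 2 := by
          rw [hkg, pow_succ]; simp only [mul_assoc]
      _ = g ^ (n + 1) * k ^ (n + 1) * fcomm k g ^ (n + 1).choose 2 := by
          rw [(hc _ _).eq, Nat.choose_succ_succ', Nat.choose_one_right,
            pow_add (fcomm k g), pow_succ k]
          simp only [mul_assoc]

end Commutators

section NearCenter

/-- The central elements of exponent dividing `m`; in a central extension whose kernel has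
exponent `m` it contains the kernel, without reference to the extension. -/
def torsionCenter (m : ℕ) (G : Type*) [Group G] : Subgroup G where
  carrier := {x | x ∈ Subgroup.center G ∧ x ^ m = 1}
  one_mem' := ⟨one_mem _, one_pow m⟩
  mul_mem' hx hy := ⟨mul_mem hx.1 hy.1, by
    rw [(commute_of_mem_center hx.1 _).mul_pow, hx.2, hy.2, one_mul]⟩
  inv_mem' hx := ⟨inv_mem hx.1, by rw [inv_pow, hx.2, inv_one]⟩

instance (m : ℕ) (G : Type*) [Group G] : (torsionCenter m G).Normal where
  conj_mem x hx g := by rwa [← (commute_of_mem_center hx.1 g).eq, mul_inv_cancel_right]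

/-- The elements that are central modulo `torsionCenter m G`. -/
def nearCenter (m : ℕ) (G : Type*) [Group G] : Subgroup G :=
  Subgroup.upperCentralSeriesStep (torsionCenter m G)

variable {G : Type*} [Group G] {m : ℕ} {g k x : G}

theorem commute_of_mem_torsionCenter (hx : x ∈ torsionCenter m G) (y : G) : Commute x y :=
  commute_of_mem_center hx.1 y

theorem mem_nearCenter_iff : k ∈ nearCenter m G ↔ ∀ g, fcomm k g ∈ torsionCenter m G := by
  rw [← inv_mem_iff, nearCenter, Subgroup.mem_upperCentralSeriesStep, inv_surjective.forall]
  simp only [commutatorElement_def, inv_inv, fcomm]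

theorem center_le_nearCenter : Subgroup.center G ≤ nearCenter m G := fun k hk =>
  mem_nearCenter_iff.2 fun g => by
    rw [fcomm_eq_one_iff_commute.2 (commute_of_mem_center hk g)]
    exact one_mem _

instance : (nearCenter m G).Normal := by
  rw [nearCenter, Subgroup.upperCentralSeriesStep_eq_comap_center]
  infer_instance

theorem fcomm_pow_eq_one_of_mem_nearCenter (hk : k ∈ nearCenter m G) (g : G) :
    fcomm k g ^ m = 1 :=
  (mem_nearCenter_iff.1 hk g).2

theorem commute_fcomm_of_mem_nearCenter (hk : k ∈ nearCenter m G) (g x : G) :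
    Commute (fcomm k g) x :=
  commute_of_mem_torsionCenter (mem_nearCenter_iff.1 hk g) x

theorem pow_mem_center_of_mem_nearCenter (hk : k ∈ nearCenter m G) :
    k ^ m ∈ Subgroup.center G := by
  refine Subgroup.mem_center_iff.2 fun g => (Commute.symm ?_).eq
  rw [← fcomm_eq_one_iff_commute, ← zpow_natCast,
    fcomm_zpow_left (commute_fcomm_of_mem_nearCenter hk g k), zpow_natCast,
    fcomm_pow_eq_one_of_mem_nearCenter hk]

theorem mk_mem_center_of_mem_nearCenter (hk : k ∈ nearCenter m G) :
    (k : G ⧸ Subgroup.center G) ∈ Subgroup.center (G ⧸ Subgroup.center G) := by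
  refine Subgroup.mem_center_iff.2 fun g => ?_
  obtain ⟨g, rfl⟩ := QuotientGroup.mk_surjective g
  refine (fcomm_eq_one_iff_commute.1 ?_).symm.eq
  rw [← QuotientGroup.coe_mk', ← map_fcomm, QuotientGroup.mk'_apply, QuotientGroup.eq_one_iff]
  exact (mem_nearCenter_iff.1 hk g).1

theorem fcomm_conj_right_of_mem_nearCenter (hk : k ∈ nearCenter m G) (x g : G) :
    fcomm k (g⁻¹ * x * g) = fcomm k x := by
  have hconj : g * k * g⁻¹ = k * fcomm k g⁻¹ := by
    rw [← inv_mul_mul_eq_mul_fcomm, inv_inv]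
  calc fcomm k (g⁻¹ * x * g) = g⁻¹ * fcomm (g * k * g⁻¹) x * g := by simp only [fcomm]; group
    _ = g⁻¹ * fcomm k x * g := by
      rw [hconj, fcomm_mul_left (commute_fcomm_of_mem_nearCenter hk _ _),
        fcomm_eq_one_iff_commute.2 (commute_fcomm_of_mem_nearCenter hk _ _), mul_one]
    _ = fcomm k x := inv_mul_mul_eq_of_commute (commute_fcomm_of_mem_nearCenter hk _ _)

theorem mul_pow_of_mem_nearCenter (hm : Odd m) (hk : k ∈ nearCenter m G) (g : G) :
    (g * k) ^ m = g ^ m * k ^ m := by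
  obtain ⟨j, hj⟩ := hm
  have hchoose : m.choose 2 = m * j := by
    rw [Nat.choose_two_right, hj, Nat.add_sub_cancel, mul_left_comm,
      Nat.mul_div_cancel_left _ two_pos]
  rw [mul_pow_eq_mul_fcomm_pow_choose (mem_nearCenter_iff.1 hk g).1, hchoose, pow_mul,
    fcomm_pow_eq_one_of_mem_nearCenter hk, one_pow, mul_one]

theorem fcomm_pow_left_of_mem_nearCenter (hm : Odd m) (h : fcomm x g ∈ nearCenter m G) :
    fcomm (x ^ m) g = fcomm x g ^ m := by
  rw [← mul_right_inj (x ^ m), ← inv_mul_mul_eq_mul_fcomm, inv_mul_pow_mul,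
    inv_mul_mul_eq_mul_fcomm, mul_pow_of_mem_nearCenter hm h]

end NearCenter

section Rotation

variable {G : Type*} [Group G] {a p q : G}

theorem fcomm_zpow_mul_zpow (h : Commute p q) (hp : a⁻¹ * p * a = q)
    (hq : a⁻¹ * q * a = (p * q)⁻¹) (i j : ℤ) :
    fcomm (p ^ i * q ^ j) a = p ^ (-i - j) * q ^ (i - 2 * j) := by
  have hconj : a⁻¹ * (p ^ i * q ^ j) * a = p ^ (-j) * q ^ (i - j) :=
    calc a⁻¹ * (p ^ i * q ^ j) * a = (a⁻¹ * p ^ i * a) * (a⁻¹ * q ^ j * a) := by group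
      _ = q ^ i * (p ^ (-j) * q ^ (-j)) := by
        rw [inv_mul_zpow_mul, inv_mul_zpow_mul, hp, hq, inv_zpow', h.mul_zpow]
      _ = p ^ (-j) * (q ^ i * q ^ (-j)) := (h.symm.zpow_zpow i (-j)).left_comm _
      _ = p ^ (-j) * q ^ (i - j) := by rw [← zpow_add, ← sub_eq_add_neg]
  rw [← mul_right_inj (p ^ i * q ^ j), ← inv_mul_mul_eq_mul_fcomm, hconj,
    (h.symm.zpow_zpow _ _).mul_mul_mul_comm, ← zpow_add, ← zpow_add]
  congr 2 <;> ring

theorem fcomm_fcomm_zpow_mul_zpow (h : Commute p q) (hp : a⁻¹ * p * a = q)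
    (hq : a⁻¹ * q * a = (p * q)⁻¹) (i j : ℤ) :
    fcomm (fcomm (p ^ i * q ^ j) a) a = p ^ (3 * j) * q ^ (3 * (j - i)) := by
  rw [fcomm_zpow_mul_zpow h hp hq, fcomm_zpow_mul_zpow h hp hq]
  congr 2 <;> ring

end Rotation

theorem finite_and_finrank_le_of_ker_le {k V W P : Type*} [Field k] [AddCommGroup V]
    [AddCommGroup W] [AddCommGroup P] [Module k V] [Module k W] [Module k P] [Module.Finite k P]
    {L : V →ₗ[k] P} {π : V →ₗ[k] W} (hπ : Function.Surjective π)
    (h : LinearMap.ker L ≤ LinearMap.ker π) :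
    Module.Finite k W ∧ Module.finrank k W ≤ Module.finrank k P := by
  have hq : Function.Surjective ((LinearMap.ker L).liftQ π h) := by
    rw [← LinearMap.range_eq_top, Submodule.range_liftQ, LinearMap.range_eq_top.2 hπ]
  have := Module.Finite.equiv L.quotKerEquivRange.symm
  refine ⟨.of_surjective _ hq, (LinearMap.finrank_le_finrank_of_surjective hq).trans ?_⟩
  rw [L.quotKerEquivRange.finrank_eq]
  exact Submodule.finrank_le _

section Extension

open groupCohomology

universe u

variable {k G : Type u} [CommRing k] [Group G]

/-- The value of a 2-cocycle at `(g, h)`, normalised so as to vanish when `g = 1` or `h = 1`. -/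
def normalizedValue (g h : G) : cocycles₂ (Rep.trivial k G k) →ₗ[k] k where
  toFun f := f (g, h) - f (1, 1)
  map_add' _ _ := add_sub_add_comm _ _ _ _
  map_smul' c _ := (mul_sub c _ _).symm

theorem normalizedValue_one_left (f : cocycles₂ (Rep.trivial k G k)) (g : G) :
    normalizedValue 1 g f = 0 :=
  sub_eq_zero.2 (cocycles₂_map_one_fst f g)

theorem normalizedValue_one_right (f : cocycles₂ (Rep.trivial k G k)) (g : G) :
    normalizedValue g 1 f = 0 :=
  sub_eq_zero.2 (cocycles₂_map_one_snd f g)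

theorem normalizedValue_mul (f : cocycles₂ (Rep.trivial k G k)) (g h j : G) :
    normalizedValue (g * h) j f + normalizedValue g h f =
      normalizedValue h j f + normalizedValue g (h * j) f := by
  have hf : (f (g * h, j) + f (g, h) : k) = f (h, j) + f (g, h * j) :=
    (mem_cocycles₂_iff _).1 f.2 g h j
  simp only [normalizedValue, LinearMap.coe_mk, AddHom.coe_mk]
  linear_combination hf

/-- The central extension of `G` by the additive group `k` attached to a 2-cocycle `f`; the fibre
coordinate is normalised so that the identity element is `⟨1, 0⟩`. -/
@[ext]
structure CocycleExt (f : cocycles₂ (Rep.trivial k G k)) where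
  base : G
  fib : k

namespace CocycleExt

variable {f : cocycles₂ (Rep.trivial k G k)} {x : CocycleExt f}

instance : Mul (CocycleExt f) :=
  ⟨fun x y => ⟨x.base * y.base, x.fib + y.fib + normalizedValue x.base y.base f⟩⟩

instance : One (CocycleExt f) := ⟨⟨1, 0⟩⟩

instance : Inv (CocycleExt f) :=
  ⟨fun x => ⟨x.base⁻¹, -x.fib - normalizedValue x.base⁻¹ x.base f⟩⟩

@[simp] theorem base_mul (x y : CocycleExt f) : (x * y).base = x.base * y.base := rfl

@[simp] theorem fib_mul (x y : CocycleExt f) :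
    (x * y).fib = x.fib + y.fib + normalizedValue x.base y.base f := rfl

@[simp] theorem base_one : (1 : CocycleExt f).base = 1 := rfl

@[simp] theorem fib_one : (1 : CocycleExt f).fib = 0 := rfl

@[simp] theorem base_inv (x : CocycleExt f) : x⁻¹.base = x.base⁻¹ := rfl

@[simp] theorem fib_inv (x : CocycleExt f) :
    x⁻¹.fib = -x.fib - normalizedValue x.base⁻¹ x.base f := rfl

instance : Group (CocycleExt f) :=
  Group.ofLeftAxioms
    (fun x y z => CocycleExt.ext (mul_assoc _ _ _) <| by
      simp only [fib_mul, base_mul]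
      linear_combination normalizedValue_mul f x.base y.base z.base)
    (fun x => by ext <;> simp [normalizedValue_one_left])
    (fun x => CocycleExt.ext (inv_mul_cancel _) <| by
      simp only [fib_mul, fib_inv, base_inv, fib_one]
      abel)

/-- The projection of the extension onto `G`. -/
@[simps]
def proj (f : cocycles₂ (Rep.trivial k G k)) : CocycleExt f →* G where
  toFun := base
  map_one' := rfl
  map_mul' _ _ := rfl

theorem mem_center_of_base_eq_one (hx : x.base = 1) : x ∈ Subgroup.center (CocycleExt f) :=
  Subgroup.mem_center_iff.2 fun g => by
    ext
    · simp [hx]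
    · simp [hx, normalizedValue_one_left, normalizedValue_one_right, add_comm]

theorem pow_of_base_eq_one (hx : x.base = 1) (n : ℕ) : x ^ n = ⟨1, n * x.fib⟩ := by
  induction n with
  | zero => ext <;> simp
  | succ n ih =>
    rw [pow_succ, ih]
    ext <;> simp [hx, normalizedValue_one_left, add_mul]

theorem mem_nearCenter_of_base_mem_center (m : ℕ) [CharP k m]
    (hx : x.base ∈ Subgroup.center G) : x ∈ nearCenter m (CocycleExt f) :=
  mem_nearCenter_iff.2 fun g => by
    have hbase : (fcomm x g).base = 1 := by
      rw [← proj_apply, map_fcomm, fcomm_eq_one_iff_commute]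
      exact commute_of_mem_center hx _
    refine ⟨mem_center_of_base_eq_one hbase, ?_⟩
    rw [pow_of_base_eq_one hbase, CharP.cast_eq_zero, zero_mul]
    rfl

theorem mem_coboundaries₂_of_splitting (φ : G →* CocycleExt f) (hφ : (proj f).comp φ = .id G) :
    ⇑f ∈ coboundaries₂ (Rep.trivial k G k) := by
  refine ⟨fun g => f (1, 1) - (φ g).fib, funext fun ⟨g, h⟩ => ?_⟩
  have hbase (g : G) : (φ g).base = g := DFunLike.congr_fun hφ g
  have hmul := congrArg fib (map_mul φ g h)
  simp only [fib_mul, hbase, normalizedValue, LinearMap.coe_mk, AddHom.coe_mk] at hmul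
  change (f (1, 1) - (φ h).fib - (f (1, 1) - (φ (g * h)).fib) + (f (1, 1) - (φ g).fib) : k) =
    f (g, h)
  linear_combination hmul

/-- The homomorphism from a free group to the extension that sends each generator to the lift of
`x i` with trivial fibre coordinate. -/
def freeLift {ι : Type*} (x : ι → G) (f : cocycles₂ (Rep.trivial k G k)) :
    FreeGroup ι →* CocycleExt f :=
  FreeGroup.lift fun i => ⟨x i, 0⟩

variable {ι : Type*} (x : ι → G) (w : FreeGroup ι)

theorem base_freeLift (f : cocycles₂ (Rep.trivial k G k)) :
    (freeLift x f w).base = FreeGroup.lift x w := by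
  have hcomp : (proj f).comp (freeLift x f) = FreeGroup.lift x := by
    ext i
    simp [freeLift]
  exact DFunLike.congr_fun hcomp w

/-- The fibre coordinate of a word in the chosen lifts, as a functional on 2-cocycles. -/
def wordFunctional : cocycles₂ (Rep.trivial k G k) →ₗ[k] k where
  toFun f := (freeLift x f w).fib
  map_add' f g := by
    induction w using FreeGroup.induction_on with
    | C1 => simp
    | of i => simp [freeLift]
    | inv_of i ih => simp only [map_inv, fib_inv, base_freeLift, map_add, ih]; abel
    | mul v w hv hw => simp only [map_mul, fib_mul, base_freeLift, map_add, hv, hw]; abel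
  map_smul' c f := by
    induction w using FreeGroup.induction_on with
    | C1 => simp
    | of i => simp [freeLift]
    | inv_of i ih => simp_all [base_freeLift, mul_sub]
    | mul v w hv hw => simp_all [base_freeLift, mul_add]

theorem freeLift_eq_one_iff {f : cocycles₂ (Rep.trivial k G k)} (hw : FreeGroup.lift x w = 1) :
    freeLift x f w = 1 ↔ wordFunctional x w f = 0 := by
  rw [CocycleExt.ext_iff, base_freeLift, hw]
  exact and_iff_right rfl

end CocycleExt

open CocycleExt

theorem finite_and_finrank_H2_le_card {k G : Type u} [Field k] [Group G] {ι κ : Type*} [Fintype κ]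
    {x : ι → G} (hx : Subgroup.closure (Set.range x) = ⊤) {r : κ → FreeGroup ι}
    (hr : ∀ j, FreeGroup.lift x (r j) = 1)
    (hlift : ∀ f : cocycles₂ (Rep.trivial k G k), (∀ j, freeLift x f (r j) = 1) →
      ∃ φ : G →* CocycleExt f, ∀ i, φ (x i) = freeLift x f (.of i)) :
    Module.Finite k (groupCohomology (Rep.trivial k G k) 2) ∧
      Module.finrank k (groupCohomology (Rep.trivial k G k) 2) ≤ Fintype.card κ := by
  let L : cocycles₂ (Rep.trivial k G k) →ₗ[k] κ → k := LinearMap.pi fun j => wordFunctional x (r j)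
  have hπ : Function.Surjective (H2π (Rep.trivial k G k)).hom :=
    (ModuleCat.epi_iff_surjective _).1 inferInstance
  have hker : LinearMap.ker L ≤ LinearMap.ker (H2π (Rep.trivial k G k)).hom := fun f hf => by
    obtain ⟨φ, hφ⟩ := hlift f fun j => (freeLift_eq_one_iff x (r j) (hr j)).2 (congrFun hf j)
    refine (H2π_eq_zero_iff f).2 (mem_coboundaries₂_of_splitting φ ?_)
    refine MonoidHom.eq_of_eqOn_dense hx (Set.eqOn_range.2 (funext fun i => ?_))
    simp [hφ, base_freeLift]
  simpa using finite_and_finrank_le_of_ker_le hπ hker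

end Extension

section LowDegree

open groupCohomology

universe u

theorem finrank_H1_eq_card {k G : Type u} [Field k] [Group G] {ι : Type*} [Fintype ι] {x : ι → G}
    (hx : Subgroup.closure (Set.range x) = ⊤)
    (hlift : ∀ y : ι → Multiplicative k, ∃ χ : G →* Multiplicative k, ∀ i, χ (x i) = y i) :
    Module.finrank k (groupCohomology (Rep.trivial k G k) 1) = Fintype.card ι := by
  let ev : (Additive G →+ k) →ₗ[k] ι → k :=
    { toFun := fun χ i => χ (.ofMul (x i))
      map_add' := fun _ _ => rfl
      map_smul' := fun _ _ => rfl }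
  have hinj : Function.Injective ev := fun χ θ h =>
    AddMonoidHom.toMultiplicativeRight.injective <|
      MonoidHom.eq_of_eqOn_dense hx (Set.eqOn_range.2 h)
  have hsurj : Function.Surjective ev := fun y => by
    obtain ⟨χ, hχ⟩ := hlift y
    exact ⟨χ.toAdditiveLeft, funext hχ⟩
  calc _ = Module.finrank k (Additive G →+ k) :=
        (H1IsoOfIsTrivial (Rep.trivial k G k)).toLinearEquiv.finrank_eq
    _ = Module.finrank k (ι → k) := (LinearEquiv.ofBijective ev ⟨hinj, hsurj⟩).finrank_eq
    _ = Fintype.card ι := Module.finrank_fintype_fun_eq_card k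

end LowDegree

section Bockstein

open groupCohomology

variable {p : ℕ} [NeZero p]

/-- The carry in the addition of the residues of `x` and `y`; it describes the extension
`0 → ℤ/p → ℤ/p² → ℤ/p → 0`. -/
def carry (x y : ZMod p) : ℕ := (x.val + y.val) / p

theorem val_add_val (x y : ZMod p) : x.val + y.val = (x + y).val + p * carry x y := by
  rw [carry, ZMod.val_add, Nat.mod_add_div]

theorem carry_add_carry (x y z : ZMod p) :
    carry (x + y) z + carry x y = carry y z + carry x (y + z) := by
  have h₁ := val_add_val (x + y) z
  have h₂ := val_add_val x (y + z)
  rw [← add_assoc] at h₂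
  refine Nat.eq_of_mul_eq_mul_left (NeZero.pos p) ?_
  linarith [val_add_val x y, val_add_val y z]

theorem carry_add_add (x y z w : ZMod p) :
    carry (x + y) (z + w) + carry x y + carry z w =
      carry x z + carry y w + carry (x + z) (y + w) := by
  have h := val_add_val (x + y) (z + w)
  rw [add_add_add_comm] at h
  refine Nat.eq_of_mul_eq_mul_left (NeZero.pos p) ?_
  linarith [val_add_val x y, val_add_val z w, val_add_val x z, val_add_val y w,
    val_add_val (x + z) (y + w)]

variable (p) in
/-- Multiplication by `p`, as the embedding of `ℤ/p` into `ℤ/p²`. -/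
def mulEmbedding : ZMod p →+ ZMod (p ^ 2) :=
  ZMod.lift p ⟨zmultiplesHom _ (p : ZMod (p ^ 2)), by
    rw [zmultiplesHom_apply, natCast_zsmul, nsmul_eq_mul, ← Nat.cast_mul, ← pow_two,
      ZMod.natCast_self]⟩

omit [NeZero p] in
theorem mulEmbedding_natCast (n : ℕ) : mulEmbedding p n = p * n := by
  rw [mulEmbedding, ← Int.cast_natCast (R := ZMod p) n, ZMod.lift_coe, zmultiplesHom_apply,
    natCast_zsmul, nsmul_eq_mul, mul_comm]

theorem mulEmbedding_injective : Function.Injective (mulEmbedding p) :=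
  (injective_iff_map_eq_zero _).2 fun x hx => by
    rw [← ZMod.natCast_zmod_val x, mulEmbedding_natCast, ← Nat.cast_mul,
      ZMod.natCast_eq_zero_iff, pow_two, Nat.mul_dvd_mul_iff_left (NeZero.pos p)] at hx
    rwa [← ZMod.natCast_zmod_val x, ZMod.natCast_eq_zero_iff]

omit [NeZero p] in
theorem natCast_mul_mulEmbedding (x : ZMod p) : p * mulEmbedding p x = 0 := by
  rw [← nsmul_eq_mul, ← map_nsmul, nsmul_eq_mul, ZMod.natCast_self, zero_mul, map_zero]

theorem natCast_val_add (x y : ZMod p) :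
    (x.val + y.val : ZMod (p ^ 2)) = (x + y).val + mulEmbedding p (carry x y) := by
  rw [mulEmbedding_natCast]
  exact_mod_cast congrArg _ (val_add_val x y)

variable {G : Type} [Group G]

/-- The Bockstein cocycle of a character, the pullback of the carry cocycle. -/
def bocksteinCocycle (χ : Additive G →+ ZMod p) :
    cocycles₂ (Rep.trivial (ZMod p) G (ZMod p)) :=
  ⟨fun g => carry (χ (.ofMul g.1)) (χ (.ofMul g.2)), (mem_cocycles₂_iff _).2 fun g h j => by
    simp only [ofMul_mul, map_add, Representation.trivial_apply]
    exact_mod_cast congrArg Nat.cast (carry_add_carry _ _ _)⟩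

/-- The Bockstein homomorphism `H¹(G, ℤ/p) → H²(G, ℤ/p)`, defined on characters. -/
noncomputable def bockstein (p : ℕ) [NeZero p] (G : Type) [Group G] :
    (Additive G →+ ZMod p) →ₗ[ZMod p] groupCohomology (Rep.trivial (ZMod p) G (ZMod p)) 2 :=
  AddMonoidHom.toZModLinearMap p <| AddMonoidHom.mk'
    (fun χ => (H2π (Rep.trivial (ZMod p) G (ZMod p))).hom (bocksteinCocycle χ)) fun χ θ => by
      rw [← map_add, ← sub_eq_zero, ← map_sub]
      refine (H2π_eq_zero_iff _).2 ⟨fun g => - carry (χ (.ofMul g)) (θ (.ofMul g)),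
        funext fun ⟨g, h⟩ => ?_⟩
      have hcarry := congrArg (Nat.cast (R := ZMod p)) (carry_add_add (χ (.ofMul g))
        (χ (.ofMul h)) (θ (.ofMul g)) (θ (.ofMul h)))
      change -(carry (χ (.ofMul h)) (θ (.ofMul h)) : ZMod p) -
        -carry (χ (.ofMul (g * h))) (θ (.ofMul (g * h))) +
        -carry (χ (.ofMul g)) (θ (.ofMul g)) = carry ((χ + θ) (.ofMul g)) ((χ + θ) (.ofMul h)) -
          (carry (χ (.ofMul g)) (χ (.ofMul h)) + carry (θ (.ofMul g)) (θ (.ofMul h)))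
      simp only [ofMul_mul, map_add, AddMonoidHom.add_apply]
      push_cast at hcarry
      linear_combination hcarry

theorem exists_eq_sub_mulEmbedding {χ : Additive G →+ ZMod p} (hχ : bockstein p G χ = 0) :
    ∃ (ψ : Additive G →+ ZMod (p ^ 2)) (b : Additive G → ZMod p),
      ∀ g, ψ g = ((χ g).val : ZMod (p ^ 2)) - mulEmbedding p (b g) := by
  obtain ⟨b, hb⟩ := (H2π_eq_zero_iff (bocksteinCocycle χ)).1 hχ
  refine ⟨AddMonoidHom.mk' (fun g => ((χ g).val : ZMod (p ^ 2)) - mulEmbedding p (b g))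
    fun g h => ?_, b, fun _ => rfl⟩
  have hgh : b h - b (g + h) + b g = carry (χ g) (χ h) := congrFun hb (g, h)
  have hemb := congrArg (mulEmbedding p) hgh
  simp only [map_add, map_sub] at hemb ⊢
  linear_combination hemb - natCast_val_add (χ g) (χ h)

theorem bockstein_injective (h : ∀ ψ : Additive G →+ ZMod (p ^ 2), p • ψ = 0) :
    Function.Injective (bockstein p G) :=
  (injective_iff_map_eq_zero _).2 fun χ hχ => AddMonoidHom.ext fun g => by
    obtain ⟨ψ, b, hψ⟩ := exists_eq_sub_mulEmbedding hχ
    have hg : p * ψ g = 0 := by rw [← nsmul_eq_mul]; exact DFunLike.congr_fun (h ψ) g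
    rw [hψ, mul_sub, natCast_mul_mulEmbedding, sub_zero, ← mulEmbedding_natCast,
      ZMod.natCast_zmod_val] at hg
    exact mulEmbedding_injective (hg.trans (map_zero _).symm)

theorem finrank_H1_le_finrank_H2 {p : ℕ} [Fact p.Prime]
    [Module.Finite (ZMod p) (groupCohomology (Rep.trivial (ZMod p) G (ZMod p)) 2)]
    (h : ∀ ψ : Additive G →+ ZMod (p ^ 2), p • ψ = 0) :
    Module.finrank (ZMod p) (groupCohomology (Rep.trivial (ZMod p) G (ZMod p)) 1) ≤
      Module.finrank (ZMod p) (groupCohomology (Rep.trivial (ZMod p) G (ZMod p)) 2) :=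
  (H1IsoOfIsTrivial (Rep.trivial (ZMod p) G (ZMod p))).toLinearEquiv.finrank_eq.trans_le <|
    LinearMap.finrank_le_finrank_of_injective (bockstein_injective h)

end Bockstein

namespace CoverLimitDef

section Words

variable {G H : Type*} [Group G] [Group H]

/-- The generator `u` of the cover limit as a word in `a` and `t`. -/
def wordU (a t : G) : G := a⁻¹ * t * a

/-- The commutator `s = [u,t]` as a word in `a` and `t`. -/
def wordS (a t : G) : G := fcomm (wordU a t) t

/-- The generator `y` of the cover limit `C^(e)` as a word in `a` and `t`. -/
def wordY (e : ℕ) (a t : G) : G :=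
  (a⁻¹ * wordU a t * a * t * wordU a t)⁻¹ * wordS a t ^ e

/-- The generator `z` of the cover limit as a word in `a` and `t`; its definition uses
`[[t,a],t] = [u,t]`. -/
def wordZ (a t : G) : G := a ^ 3 * wordS a t

/-- The left-normed commutator `[t,a,…,a]` with `k` copies of `a`, so that `w_c` is
`wordW a t (c - 1)`. -/
def wordW (a t : G) : ℕ → G
  | 0 => t
  | k + 1 => fcomm (wordW a t k) a

/-- The element `v_c` as a word in `a` and `t`. -/
def wordV (c : ℕ) (a t : G) : G := fcomm (wordW a t (c - 3)) (fcomm t a)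

/-- The relator `y·w_c^ℓ·v_c` of `Q_c^{(e,ℓ)}` as a word in `a` and `t`. -/
def relatorY (c e : ℕ) (ℓ : ℤ) (a t : G) : G :=
  wordY e a t * wordW a t (c - 1) ^ ℓ * wordV c a t

/-- The relator `z·w_c` of `Q_c^{(e,ℓ)}` as a word in `a` and `t`. -/
def relatorZ (c : ℕ) (a t : G) : G := wordZ a t * wordW a t (c - 1)

variable (φ : G →* H) (a t : G)

theorem map_wordS : φ (wordS a t) = wordS (φ a) (φ t) := by
  simp [wordS, wordU, map_fcomm]

theorem map_wordY (e : ℕ) : φ (wordY e a t) = wordY e (φ a) (φ t) := by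
  simp [wordY, wordU, map_wordS]

theorem map_wordZ : φ (wordZ a t) = wordZ (φ a) (φ t) := by
  simp [wordZ, map_wordS]

theorem map_wordW (k : ℕ) : φ (wordW a t k) = wordW (φ a) (φ t) k := by
  induction k with
  | zero => rfl
  | succ k ih => rw [wordW, map_fcomm, ih, wordW]

theorem map_relatorY (c e : ℕ) (ℓ : ℤ) :
    φ (relatorY c e ℓ a t) = relatorY c e ℓ (φ a) (φ t) := by
  simp [relatorY, wordV, map_wordY, map_wordW, map_fcomm]

theorem map_relatorZ (c : ℕ) : φ (relatorZ c a t) = relatorZ c (φ a) (φ t) := by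
  simp [relatorZ, map_wordZ, map_wordW]

variable {a t} {g : G}

theorem fcomm_eq_inv_mul_wordU (a t : G) : fcomm t a = t⁻¹ * wordU a t := by
  simp only [wordU, fcomm]; group

theorem fcomm_fcomm_eq_wordS (a t : G) : fcomm (fcomm t a) t = wordS a t := by
  simp only [wordS, wordU, fcomm]; group

theorem inv_mul_wordU_mul (e : ℕ) (a t : G) :
    a⁻¹ * wordU a t * a = wordS a t ^ e * (wordY e a t)⁻¹ * (t * wordU a t)⁻¹ := by
  rw [wordY]; group

theorem commute_wordU (ha : Commute g a) (ht : Commute g t) : Commute g (wordU a t) :=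
  (ha.inv_right.mul_right ht).mul_right ha

theorem commute_wordS (ha : Commute g a) (ht : Commute g t) : Commute g (wordS a t) :=
  commute_fcomm (commute_wordU ha ht) ht

theorem commute_wordZ (ha : Commute g a) (ht : Commute g t) : Commute g (wordZ a t) :=
  (ha.pow_right 3).mul_right (commute_wordS ha ht)

theorem commute_wordW (ha : Commute g a) (ht : Commute g t) (k : ℕ) :
    Commute g (wordW a t k) := by
  induction k with
  | zero => exact ht
  | succ k ih => exact commute_fcomm ih ha

theorem inv_mul_wordS_mul {e : ℕ} {a t : G}
    (h : Commute (fcomm (wordS a t ^ e * (wordY e a t)⁻¹) (wordU a t)) (t * wordU a t)) :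
    a⁻¹ * wordS a t * a =
      fcomm (wordS a t ^ e * (wordY e a t)⁻¹) (wordU a t) * (t * wordS a t * t⁻¹) :=
  calc a⁻¹ * wordS a t * a = fcomm (a⁻¹ * wordU a t * a) (wordU a t) := by
        simp only [wordS, wordU, fcomm]; group
    _ = fcomm (wordS a t ^ e * (wordY e a t)⁻¹) (wordU a t) *
          fcomm (t * wordU a t)⁻¹ (wordU a t) := by
        rw [inv_mul_wordU_mul e, fcomm_mul_left h.inv_right]
    _ = _ := by
        congr 1
        simp only [wordS, fcomm]; group

end Words

section Presentation

variable {G H : Type*} [Group G] [Group H] {c e : ℕ} {ℓ : ℤ} {a t u y z : G}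

/-- The relations of the cover limit `C^(e)` in terms of the two generators `a` and `t`. -/
structure CoverRelations (e : ℕ) (a t : G) : Prop where
  commute_s_t : Commute (wordS a t) t
  commute_s_a : Commute (wordS a t) a
  commute_y_t : Commute (wordY e a t) t
  commute_y_a : Commute (wordY e a t) a
  commute_z_t : Commute (wordZ a t) t
  y_pow_three : wordY e a t ^ 3 = 1
  z_pow_three : wordZ a t ^ 3 = 1

/-- The relations of `Q_c^{(e,ℓ)}` in terms of the two generators `a` and `t`. -/
structure QRelations (c e : ℕ) (ℓ : ℤ) (a t : G) : Prop extends CoverRelations e a t where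
  relatorY_eq_one : relatorY c e ℓ a t = 1
  relatorZ_eq_one : relatorZ c a t = 1

theorem CoverRelations.commute_z_a (h : CoverRelations e a t) : Commute (wordZ a t) a :=
  ((Commute.refl a).pow_left 3).mul_left h.commute_s_a

theorem CoverRelations.map (h : CoverRelations e a t) (φ : G →* H) :
    CoverRelations e (φ a) (φ t) where
  commute_s_t := map_wordS φ a t ▸ h.commute_s_t.map φ
  commute_s_a := map_wordS φ a t ▸ h.commute_s_a.map φ
  commute_y_t := map_wordY φ a t e ▸ h.commute_y_t.map φ
  commute_y_a := map_wordY φ a t e ▸ h.commute_y_a.map φ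
  commute_z_t := map_wordZ φ a t ▸ h.commute_z_t.map φ
  y_pow_three := by rw [← map_wordY, ← map_pow, h.y_pow_three, map_one]
  z_pow_three := by rw [← map_wordZ, ← map_pow, h.z_pow_three, map_one]

theorem QRelations.map (h : QRelations c e ℓ a t) (φ : G →* H) : QRelations c e ℓ (φ a) (φ t) where
  toCoverRelations := h.toCoverRelations.map φ
  relatorY_eq_one := by rw [← map_relatorY, h.relatorY_eq_one, map_one]
  relatorZ_eq_one := by rw [← map_relatorZ, h.relatorZ_eq_one, map_one]

theorem lift_Crels_iff :
    (∀ r ∈ Crels e, FreeGroup.lift ![a, t, u, y, z] r = 1) ↔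
      CoverRelations e a t ∧ u = wordU a t ∧ y = wordY e a t ∧ z = wordZ a t := by
  simp only [Crels, Set.mem_insert_iff, Set.mem_singleton_iff, forall_eq_or_imp, forall_eq,
    map_mul, map_inv, map_pow, map_fcomm, awF, twF, uwF, ywF, zwF, FreeGroup.lift_apply_of,
    mul_inv_eq_one, fcomm_eq_one_iff_commute, Matrix.cons_val]
  constructor
  · rintro ⟨hu, hy, hz, hst, hsu, hy3, hay, hty, huy, -, hz3, htz, -⟩
    obtain rfl : u = wordU a t := hu.symm
    change Commute (wordS a t) t at hst
    change Commute (wordS a t) (wordU a t) at hsu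
    obtain rfl : y = wordY e a t := eq_inv_mul_of_mul_eq hy
    obtain rfl : z = wordZ a t := by rw [← hz, fcomm_fcomm_eq_wordS, wordZ]
    have hsa : Commute (wordS a t) a := by
      have hsyu : Commute (wordS a t ^ e * (wordY e a t)⁻¹) (wordU a t) :=
        (hsu.pow_left e).mul_left huy.symm.inv_left
      have hconj : a⁻¹ * wordS a t * a = wordS a t := by
        rw [inv_mul_wordS_mul (by
            rw [fcomm_eq_one_iff_commute.2 hsyu]; exact Commute.one_left _),
          fcomm_eq_one_iff_commute.2 hsyu, one_mul, ← hst.eq, mul_inv_cancel_right]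
      rwa [inv_mul_mul_eq_mul_fcomm, mul_eq_left, fcomm_eq_one_iff_commute] at hconj
    exact ⟨⟨hst, hsa, hty.symm, hay.symm, htz.symm, hy3, hz3⟩, rfl, rfl, rfl⟩
  · rintro ⟨h, rfl, rfl, rfl⟩
    have hyu := commute_wordU h.commute_y_a h.commute_y_t
    exact ⟨rfl, mul_inv_cancel_left _ _, by rw [fcomm_fcomm_eq_wordS, wordZ], h.commute_s_t,
      commute_wordU h.commute_s_a h.commute_s_t, h.y_pow_three, h.commute_y_a.symm,
      h.commute_y_t.symm, hyu.symm, (commute_wordZ h.commute_y_a h.commute_y_t).symm,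
      h.z_pow_three, h.commute_z_t.symm, (commute_wordU h.commute_z_a h.commute_z_t).symm⟩

theorem coverRelations_CoverLimit (e : ℕ) :
    CoverRelations e (aC e) (tC e) ∧ uC e = wordU (aC e) (tC e) ∧
      yC e = wordY e (aC e) (tC e) ∧ zC e = wordZ (aC e) (tC e) := by
  have hlift : FreeGroup.lift ![aC e, tC e, uC e, yC e, zC e] = PresentedGroup.mk (Crels e) := by
    ext i
    fin_cases i <;> simp [aC, tC, uC, yC, zC, PresentedGroup.of]
  exact lift_Crels_iff.1 fun r hr => hlift ▸ PresentedGroup.one_of_mem hr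

theorem wC_eq_wordW (e k : ℕ) : wC e k = wordW (aC e) (tC e) k := by
  induction k with
  | zero => rfl
  | succ k ih => rw [wC, ih, wordW]

theorem Qrels_eq (c e : ℕ) (ℓ : ℤ) :
    ({yC e * wC e (c - 1) ^ ℓ * vC e c, zC e * wC e (c - 1)} : Set (CoverLimit e)) =
      {relatorY c e ℓ (aC e) (tC e), relatorZ c (aC e) (tC e)} := by
  obtain ⟨-, -, hy, hz⟩ := coverRelations_CoverLimit e
  rw [vC, wC_eq_wordW, wC_eq_wordW, hy, hz, relatorY, relatorZ, wordV]

/-- The generators `a` and `t` of `Q_c^{(e,ℓ)}`. -/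
def genQ (c e : ℕ) (ℓ : ℤ) : Fin 2 → Qgrp c e ℓ := ![(aC e : Qgrp c e ℓ), (tC e : Qgrp c e ℓ)]

theorem qRelations_genQ (c e : ℕ) (ℓ : ℤ) : QRelations c e ℓ (genQ c e ℓ 0) (genQ c e ℓ 1) := by
  have hrel : ∀ r ∈ ({relatorY c e ℓ (aC e) (tC e), relatorZ c (aC e) (tC e)} :
      Set (CoverLimit e)), (QuotientGroup.mk' _ r : Qgrp c e ℓ) = 1 := fun r hr =>
    (QuotientGroup.eq_one_iff r).2 (Subgroup.subset_normalClosure (Qrels_eq c e ℓ ▸ hr))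
  simp only [Set.mem_insert_iff, Set.mem_singleton_iff, forall_eq_or_imp, forall_eq,
    map_relatorY, map_relatorZ] at hrel
  exact ⟨(coverRelations_CoverLimit e).1.map (QuotientGroup.mk' _), hrel.1, hrel.2⟩

theorem exists_hom_of_qRelations (h : QRelations c e ℓ a t) :
    ∃ φ : Qgrp c e ℓ →* G, φ (genQ c e ℓ 0) = a ∧ φ (genQ c e ℓ 1) = t := by
  let ψ : CoverLimit e →* G :=
    PresentedGroup.toGroup (lift_Crels_iff.2 ⟨h.toCoverRelations, rfl, rfl, rfl⟩)
  have ha : ψ (aC e) = a := PresentedGroup.toGroup.of _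
  have ht : ψ (tC e) = t := PresentedGroup.toGroup.of _
  refine ⟨QuotientGroup.lift _ ψ ?_, ha, ht⟩
  apply Subgroup.normalClosure_le_normal
  rw [Qrels_eq]
  simp [Set.insert_subset_iff, map_relatorY, map_relatorZ, ha, ht, h.relatorY_eq_one,
    h.relatorZ_eq_one]

theorem closure_aC_tC (e : ℕ) : Subgroup.closure {aC e, tC e} = ⊤ := by
  obtain ⟨-, hu, hy, hz⟩ := coverRelations_CoverLimit e
  rw [eq_top_iff, ← PresentedGroup.closure_range_of, Subgroup.closure_le]
  let a : Subgroup.closure {aC e, tC e} := ⟨aC e, Subgroup.subset_closure (by simp)⟩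
  let t : Subgroup.closure {aC e, tC e} := ⟨tC e, Subgroup.subset_closure (by simp)⟩
  rintro _ ⟨i, rfl⟩
  fin_cases i
  · exact a.2
  · exact t.2
  · change uC e ∈ Subgroup.closure {aC e, tC e}
    exact hu ▸ (wordU a t).2
  · change yC e ∈ Subgroup.closure {aC e, tC e}
    exact hy ▸ map_wordY (Subgroup.subtype _) a t e ▸ (wordY e a t).2
  · change zC e ∈ Subgroup.closure {aC e, tC e}
    exact hz ▸ map_wordZ (Subgroup.subtype _) a t ▸ (wordZ a t).2

theorem closure_range_genQ (c e : ℕ) (ℓ : ℤ) :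
    Subgroup.closure (Set.range (genQ c e ℓ)) = ⊤ := by
  rw [← Subgroup.map_top_of_surjective _ (QuotientGroup.mk'_surjective _), ← closure_aC_tC,
    MonoidHom.map_closure, Set.image_pair, genQ, Matrix.range_cons_cons_empty]
  rfl

theorem mem_center_of_commute_genQ {x : Qgrp c e ℓ} (ha : Commute x (genQ c e ℓ 0))
    (ht : Commute x (genQ c e ℓ 1)) : x ∈ Subgroup.center (Qgrp c e ℓ) := by
  have hle : Subgroup.closure (Set.range (genQ c e ℓ)) ≤ Subgroup.centralizer {x} := by
    rw [Subgroup.closure_le]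
    rintro _ ⟨i, rfl⟩
    rw [SetLike.mem_coe, Subgroup.mem_centralizer_singleton_iff]
    fin_cases i
    exacts [ha.symm, ht.symm]
  rw [closure_range_genQ] at hle
  exact Subgroup.mem_center_iff.2 fun g =>
    Subgroup.mem_centralizer_singleton_iff.1 (hle (Subgroup.mem_top g))

end Presentation

section NearCover

variable {E : Type*} [Group E] {e : ℕ} {a t κ : E}

theorem fcomm_cube_wordU (hs : wordS a t ∈ nearCenter 3 E) :
    fcomm (t ^ 3) (wordU a t) = (wordS a t ^ 3)⁻¹ := by
  have h : fcomm t (wordU a t) = (wordS a t)⁻¹ := by rw [wordS, fcomm_inv]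
  rw [fcomm_pow_left_of_mem_nearCenter (by decide) (h ▸ inv_mem hs), h, inv_pow]

theorem fcomm_wordU_cube (hs : wordS a t ∈ nearCenter 3 E) :
    fcomm (wordU a t ^ 3) t = wordS a t ^ 3 :=
  fcomm_pow_left_of_mem_nearCenter (by decide) hs

theorem commute_mk_cubes (hs : wordS a t ∈ nearCenter 3 E) :
    Commute ((t ^ 3 : E) : E ⧸ Subgroup.center E)
      ((wordU a t ^ 3 : E) : E ⧸ Subgroup.center E) := by
  rw [QuotientGroup.mk_pow _ (wordU a t)]
  refine Commute.pow_right (fcomm_eq_one_iff_commute.1 ?_) 3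
  rw [← QuotientGroup.coe_mk', ← map_fcomm, fcomm_cube_wordU hs, QuotientGroup.mk'_apply,
    QuotientGroup.eq_one_iff]
  exact inv_mem (pow_mem_center_of_mem_nearCenter hs)

theorem mk_inv_mul_wordU_cube_mul (hs : wordS a t ∈ nearCenter 3 E)
    (hy : wordY e a t ∈ nearCenter 3 E) :
    ((a⁻¹ * wordU a t ^ 3 * a : E) : E ⧸ Subgroup.center E) =
      (((t ^ 3 : E) : E ⧸ Subgroup.center E) *
        ((wordU a t ^ 3 : E) : E ⧸ Subgroup.center E))⁻¹ := by
  let π := QuotientGroup.mk' (Subgroup.center E)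
  have hπ {x : E} (hx : x ∈ Subgroup.center E) : π x = 1 := (QuotientGroup.eq_one_iff x).2 hx
  have hr : wordS a t ^ e * (wordY e a t)⁻¹ ∈ nearCenter 3 E := mul_mem (pow_mem hs e) (inv_mem hy)
  have htu : (π t * π (wordU a t)) ^ 3 = π (t ^ 3) * π (wordU a t ^ 3) := by
    have hut : fcomm (π (wordU a t)) (π t) = π (wordS a t) := (map_fcomm π _ _).symm
    rw [mul_pow_eq_mul_fcomm_pow_choose (hut ▸ mk_mem_center_of_mem_nearCenter hs), hut]
    simp only [← map_pow]
    rw [show Nat.choose 3 2 = 3 from rfl, hπ (pow_mem_center_of_mem_nearCenter hs), mul_one]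
  change π _ = (π _ * π _)⁻¹
  rw [inv_mul_pow_mul, inv_mul_wordU_mul e]
  generalize wordS a t ^ e * (wordY e a t)⁻¹ = r at hr
  have hrc : π r ∈ Subgroup.center _ := mk_mem_center_of_mem_nearCenter hr
  rw [map_pow, map_mul, ← htu, map_inv, map_mul, ← inv_pow,
    (commute_of_mem_center hrc _).mul_pow, ← map_pow,
    hπ (pow_mem_center_of_mem_nearCenter hr), one_mul]

/-- Modulo the center, conjugation by `a` acts on `⟨t³, u³⟩` like a primitive cube root of unity
`ω` on `ℤ[ω]`, and `(ω - 1)² = -3ω`. -/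
theorem exists_fcomm_fcomm_eq (hs : wordS a t ∈ nearCenter 3 E)
    (hy : wordY e a t ∈ nearCenter 3 E) (hκ : κ ∈ nearCenter 3 E) (i j : ℤ) :
    ∃ c ∈ Subgroup.center E, fcomm (fcomm ((t ^ 3) ^ i * (wordU a t ^ 3) ^ j * κ) a) a =
      (t ^ 3) ^ (3 * j) * (wordU a t ^ 3) ^ (3 * (j - i)) * c := by
  let π := QuotientGroup.mk' (Subgroup.center E)
  have hκc : π κ ∈ Subgroup.center _ := mk_mem_center_of_mem_nearCenter hκ
  have hκa : fcomm (π κ) (π a) = 1 := fcomm_eq_one_iff_commute.2 (commute_of_mem_center hκc _)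
  have hmod : π (fcomm (fcomm ((t ^ 3) ^ i * (wordU a t ^ 3) ^ j * κ) a) a) =
      π ((t ^ 3) ^ (3 * j) * (wordU a t ^ 3) ^ (3 * (j - i))) := by
    simp only [map_fcomm, map_mul, map_zpow]
    rw [fcomm_mul_left (commute_of_mem_center hκc _).symm, hκa, mul_one]
    refine fcomm_fcomm_zpow_mul_zpow (commute_mk_cubes hs) ?_ ?_ i j
    · change π (a⁻¹ * t ^ 3 * a) = π _
      rw [inv_mul_pow_mul, wordU]
    · exact mk_inv_mul_wordU_cube_mul hs hy
  exact ⟨_, QuotientGroup.eq.1 hmod.symm, (mul_inv_cancel_left _ _).symm⟩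

theorem exists_wordW_two_eq (hs : wordS a t ∈ nearCenter 3 E)
    (hy : wordY e a t ∈ nearCenter 3 E) :
    ∃ κ ∈ nearCenter 3 E, wordW a t 2 = (wordU a t ^ 3)⁻¹ * κ := by
  have hr : wordS a t ^ e * (wordY e a t)⁻¹ ∈ nearCenter 3 E := mul_mem (pow_mem hs e) (inv_mem hy)
  have hconj {k : E} (hk : k ∈ nearCenter 3 E) (g : E) : g * k * g⁻¹ ∈ nearCenter 3 E :=
    Subgroup.Normal.conj_mem inferInstance k hk g
  have hs' := hconj hs (t * wordU a t)
  refine ⟨_, mul_mem (mul_mem (hconj hs' (wordU a t)) hs') (hconj hr (t * wordU a t)), ?_⟩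
  calc wordW a t 2 = (wordU a t)⁻¹ * t * (wordU a t)⁻¹ * (a⁻¹ * wordU a t * a) := by
        simp only [wordW, wordU, fcomm]; group
    _ = _ := by
        rw [inv_mul_wordU_mul e]
        generalize wordS a t ^ e * (wordY e a t)⁻¹ = r
        simp only [wordS, fcomm]
        group

/-- Each pair of commutations with `a` rotates the exponent vector and multiplies it by `3`; the
norm form `p² - pq + q²` records that it stays primitive. -/
theorem exists_wordW_eq (hs : wordS a t ∈ nearCenter 3 E) (hy : wordY e a t ∈ nearCenter 3 E)
    (n : ℕ) :
    ∃ p q : ℤ, p ^ 2 - p * q + q ^ 2 = 1 ∧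
      (∃ κ ∈ nearCenter 3 E, wordW a t (2 * n + 2) =
        (t ^ 3) ^ (3 ^ n * p) * (wordU a t ^ 3) ^ (3 ^ n * q) * κ) ∧
      ∃ c ∈ Subgroup.center E, wordW a t (2 * n + 4) =
        (t ^ 3) ^ (3 ^ (n + 1) * q) * (wordU a t ^ 3) ^ (3 ^ (n + 1) * (q - p)) * c := by
  have hstep {p q : ℤ} {k n : ℕ} {κ : E} (hκ : κ ∈ nearCenter 3 E)
      (h : wordW a t k = (t ^ 3) ^ (3 ^ n * p) * (wordU a t ^ 3) ^ (3 ^ n * q) * κ) :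
      ∃ c ∈ Subgroup.center E, wordW a t (k + 2) =
        (t ^ 3) ^ (3 ^ (n + 1) * q) * (wordU a t ^ 3) ^ (3 ^ (n + 1) * (q - p)) * c := by
    obtain ⟨c, hc, hkc⟩ := exists_fcomm_fcomm_eq hs hy hκ (3 ^ n * p) (3 ^ n * q)
    refine ⟨c, hc, ?_⟩
    rw [wordW, wordW, h, hkc]
    congr 3 <;> ring
  induction n with
  | zero =>
    obtain ⟨κ, hκ, h⟩ := exists_wordW_two_eq hs hy
    have hκ' : wordW a t 2 =
        (t ^ 3) ^ (3 ^ 0 * 0 : ℤ) * (wordU a t ^ 3) ^ (3 ^ 0 * (-1) : ℤ) * κ := by simpa using h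
    exact ⟨0, -1, by norm_num, ⟨κ, hκ, hκ'⟩, hstep hκ hκ'⟩
  | succ n ih =>
    obtain ⟨p, q, hpq, -, c, hc, h⟩ := ih
    have hc' := center_le_nearCenter (m := 3) hc
    exact ⟨q, q - p, by linear_combination hpq, ⟨c, hc', h⟩, hstep hc' h⟩

theorem fcomm_cubes_t (hs : wordS a t ∈ nearCenter 3 E) (i j : ℤ) :
    fcomm ((t ^ 3) ^ i * (wordU a t ^ 3) ^ j) t = (wordS a t ^ 3) ^ j := by
  have ht : fcomm ((t ^ 3) ^ i) t = 1 :=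
    fcomm_eq_one_iff_commute.2 (((Commute.refl t).pow_left 3).zpow_left i)
  have hu := fcomm_wordU_cube hs
  rw [fcomm_mul_left (ht ▸ Commute.one_left _), ht, one_mul, fcomm_zpow_left, hu]
  exact hu ▸ commute_of_mem_center (pow_mem_center_of_mem_nearCenter hs) _

theorem fcomm_cubes_wordU (hs : wordS a t ∈ nearCenter 3 E) (i j : ℤ) :
    fcomm ((t ^ 3) ^ i * (wordU a t ^ 3) ^ j) (wordU a t) = (wordS a t ^ 3) ^ (-i) := by
  have hsc := inv_mem (pow_mem_center_of_mem_nearCenter hs)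
  have ht : fcomm ((t ^ 3) ^ i) (wordU a t) = (wordS a t ^ 3) ^ (-i) := by
    rw [fcomm_zpow_left, fcomm_cube_wordU hs, inv_zpow']
    exact fcomm_cube_wordU hs ▸ commute_of_mem_center hsc _
  have hu : fcomm ((wordU a t ^ 3) ^ j) (wordU a t) = 1 :=
    fcomm_eq_one_iff_commute.2 (((Commute.refl _).pow_left 3).zpow_left j)
  rw [fcomm_mul_left, ht, hu, mul_one]
  rw [ht, zpow_neg, ← inv_zpow]
  exact (commute_of_mem_center hsc _).zpow_left i

theorem exists_fcomm_wordW_eq (hs : wordS a t ∈ nearCenter 3 E)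
    (hy : wordY e a t ∈ nearCenter 3 E) (n : ℕ) :
    ∃ p q : ℤ, p ^ 2 - p * q + q ^ 2 = 1 ∧
      fcomm (wordW a t (2 * n + 4)) t = ((wordS a t ^ 3) ^ 3 ^ (n + 1)) ^ (q - p) ∧
      fcomm (wordW a t (2 * n + 4)) (wordU a t) = ((wordS a t ^ 3) ^ 3 ^ (n + 1)) ^ (-q) := by
  obtain ⟨p, q, hpq, -, c, hc, hw⟩ := exists_wordW_eq hs hy n
  have hfc (x g : E) : fcomm (x * c) g = fcomm x g := by
    rw [fcomm_mul_left (commute_of_mem_center hc _).symm,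
      fcomm_eq_one_iff_commute.2 (commute_of_mem_center hc g), mul_one]
  refine ⟨p, q, hpq, ?_, ?_⟩
  · rw [hw, hfc, fcomm_cubes_t hs, zpow_mul]
    norm_cast
  · rw [hw, hfc, fcomm_cubes_wordU hs, ← mul_neg, zpow_mul]
    norm_cast

theorem wordS_pow_eq_one (hs : wordS a t ∈ nearCenter 3 E) (hy : wordY e a t ∈ nearCenter 3 E)
    {n : ℕ} (hw : wordW a t (2 * n + 4) ∈ nearCenter 3 E) :
    (wordS a t ^ 3) ^ 3 ^ (n + 1) = 1 := by
  obtain ⟨p, q, hpq, ht, hu⟩ := exists_fcomm_wordW_eq hs hy n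
  have htu := fcomm_conj_right_of_mem_nearCenter hw t a
  have hu3 := fcomm_pow_eq_one_of_mem_nearCenter hw (wordU a t)
  rw [← wordU, ht, hu] at htu
  rw [hu, ← zpow_natCast, ← zpow_mul] at hu3
  generalize (wordS a t ^ 3) ^ 3 ^ (n + 1) = x at htu hu3
  have hdiff : x ^ ((q - p) - (-q)) = 1 := by rw [zpow_sub, htu, mul_inv_cancel]
  have hpq' : 1 = ((q - p) - (-q)) * (2 * q - p) + (-q * (3 : ℕ)) * (q - p) := by
    push_cast
    linear_combination -hpq
  rw [← zpow_one x, hpq', zpow_add, zpow_mul, zpow_mul x _ (q - p), hdiff, hu3, one_zpow, one_zpow,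
    one_mul]

theorem commute_wordW_t (hs : wordS a t ∈ nearCenter 3 E) (hy : wordY e a t ∈ nearCenter 3 E)
    {n : ℕ} (hw : wordW a t (2 * n + 4) ∈ nearCenter 3 E) :
    Commute (wordW a t (2 * n + 4)) t := by
  obtain ⟨p, q, -, ht, -⟩ := exists_fcomm_wordW_eq hs hy n
  rw [← fcomm_eq_one_iff_commute, ht, wordS_pow_eq_one hs hy hw, one_zpow]

theorem fcomm_cubes_fcomm (hs : wordS a t ∈ nearCenter 3 E) (i j : ℤ) :
    fcomm ((t ^ 3) ^ i * (wordU a t ^ 3) ^ j) (fcomm t a) = (wordS a t ^ 3) ^ (-(i + j)) := by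
  have hc (k : ℤ) (x : E) : Commute ((wordS a t ^ 3) ^ k) x :=
    commute_of_mem_center (zpow_mem (pow_mem_center_of_mem_nearCenter hs) k) x
  have ht := fcomm_cubes_t hs i j
  have htinv : fcomm ((t ^ 3) ^ i * (wordU a t ^ 3) ^ j) t⁻¹ = (wordS a t ^ 3) ^ (-j) := by
    rw [← zpow_neg_one, fcomm_zpow_right (ht ▸ hc j _), ht, ← zpow_mul, mul_neg_one]
  rw [fcomm_eq_inv_mul_wordU a t, fcomm_mul_right (htinv ▸ hc (-j) _), fcomm_cubes_wordU hs, htinv,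
    ← zpow_add, neg_add]

theorem wordV_mem_torsionCenter (hs : wordS a t ∈ nearCenter 3 E)
    (hy : wordY e a t ∈ nearCenter 3 E) {n : ℕ} (hw : wordW a t (2 * n + 4) ∈ nearCenter 3 E) :
    wordV (2 * n + 5) a t ∈ torsionCenter 3 E := by
  obtain ⟨p, q, -, ⟨κ, hκ, hwκ⟩, -⟩ := exists_wordW_eq hs hy n
  have hX := fcomm_cubes_fcomm hs (3 ^ n * p) (3 ^ n * q)
  have hmem : (wordS a t ^ 3) ^ (-(3 ^ n * p + 3 ^ n * q)) ∈ torsionCenter 3 E := by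
    refine ⟨zpow_mem (pow_mem_center_of_mem_nearCenter hs) _, ?_⟩
    rw [← zpow_natCast, ← zpow_mul,
      show -(3 ^ n * p + 3 ^ n * q) * ((3 : ℕ) : ℤ) = ((3 ^ (n + 1) : ℕ) : ℤ) * -(p + q) by
        push_cast; ring,
      zpow_mul, zpow_natCast, wordS_pow_eq_one hs hy hw, one_zpow]
  rw [wordV, show 2 * n + 5 - 3 = 2 * n + 2 by omega, hwκ,
    fcomm_mul_left (hX ▸ commute_of_mem_torsionCenter hmem κ), hX]
  exact mul_mem hmem (mem_nearCenter_iff.1 hκ _)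

end NearCover

section Relators

variable {E : Type*} [Group E] {c e n : ℕ} {ℓ : ℤ} {a t : E}

theorem wordZ_mul_wordS_inv (a t : E) : wordZ a t * (wordS a t)⁻¹ = a ^ 3 := by
  rw [wordZ, mul_inv_cancel_right]

theorem fcomm_wordZ_a (a t : E) : fcomm (wordZ a t) a = fcomm (wordS a t) a := by
  have ha : fcomm (a ^ 3) a = 1 := fcomm_eq_one_iff_commute.2 ((Commute.refl a).pow_left 3)
  rw [wordZ, fcomm_mul_left (ha ▸ Commute.one_left _), ha, one_mul]

theorem fcomm_wordS_wordU (hs : wordS a t ∈ nearCenter 3 E) :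
    fcomm (wordS a t) (wordU a t) = fcomm (wordS a t) t :=
  fcomm_conj_right_of_mem_nearCenter hs t a

theorem conj_wordS_zpow {x : E} (hs : wordS a t ∈ nearCenter 3 E)
    (hx : fcomm (wordS a t) x = fcomm (wordS a t) t) (m : ℤ) :
    wordS a t ^ m * x * (wordS a t ^ m)⁻¹ = x * fcomm (wordS a t) t ^ m :=
  hx ▸ zpow_mul_mul_inv (commute_fcomm_of_mem_nearCenter hs x _) m

theorem commute_wordY_wordU (hy : wordY e a t ∈ nearCenter 3 E) (hyt : Commute (wordY e a t) t) :
    Commute (wordY e a t) (wordU a t) := by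
  rw [← fcomm_eq_one_iff_commute] at hyt ⊢
  rw [wordU, fcomm_conj_right_of_mem_nearCenter hy, hyt]

theorem fcomm_wordS_a_eq_zpow (hs : wordS a t ∈ nearCenter 3 E)
    (hy : wordY e a t ∈ nearCenter 3 E) (hyt : Commute (wordY e a t) t) :
    fcomm (wordS a t) a = fcomm (wordS a t) t ^ ((e : ℤ) - 1) := by
  have hσ (m : ℤ) (x : E) : Commute (fcomm (wordS a t) t ^ m) x :=
    (commute_fcomm_of_mem_nearCenter hs t x).zpow_left m
  have hsu : fcomm (wordS a t ^ e) (wordU a t) = fcomm (wordS a t) t ^ (e : ℤ) := by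
    rw [← zpow_natCast, fcomm_zpow_left (commute_fcomm_of_mem_nearCenter hs _ _),
      fcomm_wordS_wordU hs]
  have hr : fcomm (wordS a t ^ e * (wordY e a t)⁻¹) (wordU a t) =
      fcomm (wordS a t) t ^ (e : ℤ) := by
    rw [fcomm_mul_left (hsu ▸ hσ e _), hsu,
      fcomm_eq_one_iff_commute.2 (commute_wordY_wordU hy hyt).inv_left, mul_one]
  have hst : t * wordS a t * t⁻¹ = wordS a t * fcomm (wordS a t) t ^ (-1 : ℤ) := by
    rw [← fcomm_zpow_right (commute_fcomm_of_mem_nearCenter hs t t), zpow_neg_one,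
      ← inv_mul_mul_eq_mul_fcomm, inv_inv]
  rw [← mul_right_inj (wordS a t), ← inv_mul_mul_eq_mul_fcomm, inv_mul_wordS_mul (hr ▸ hσ e _), hr,
    hst, (hσ e _).left_comm, ← zpow_add, ← sub_eq_add_neg]

theorem inv_cube_mul_mul_cube (e : ℕ) (a t : E) :
    (a ^ 3)⁻¹ * t * a ^ 3 = (a⁻¹ * wordS a t * a) ^ e * (a⁻¹ * wordY e a t * a)⁻¹ *
      (t * wordU a t * wordY e a t * (wordS a t ^ e)⁻¹) * (wordU a t)⁻¹ :=
  calc (a ^ 3)⁻¹ * t * a ^ 3 = a⁻¹ * (a⁻¹ * wordU a t * a) * a := by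
        rw [wordU, pow_succ, pow_two]; group
    _ = a⁻¹ * wordS a t ^ e * a * (a⁻¹ * wordY e a t * a)⁻¹ *
          (wordU a t * (a⁻¹ * wordU a t * a))⁻¹ := by
        nth_rewrite 1 [inv_mul_wordU_mul e]
        simp only [wordU]
        group
    _ = _ := by
        rw [inv_mul_wordU_mul e, inv_mul_pow_mul]
        group

theorem inv_cube_mul_mul_cube_eq (hs : wordS a t ∈ nearCenter 3 E)
    (hy : wordY e a t ∈ nearCenter 3 E) (hyt : Commute (wordY e a t) t) :
    (a ^ 3)⁻¹ * t * a ^ 3 =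
      t * (fcomm (wordS a t) t ^ ((e : ℤ) * (e - 1) + 2 * e) * (fcomm (wordY e a t) a)⁻¹) := by
  have hτ (x : E) : Commute (fcomm (wordY e a t) a)⁻¹ x :=
    (commute_fcomm_of_mem_nearCenter hy a x).inv_left
  have hσ (m : ℤ) (x : E) : Commute (fcomm (wordS a t) t ^ m) x :=
    (commute_fcomm_of_mem_nearCenter hs t x).zpow_left m
  have hstu : wordS a t ^ (e : ℤ) * (t * wordU a t) * (wordS a t ^ (e : ℤ))⁻¹ * (wordU a t)⁻¹ =
      t * fcomm (wordS a t) t ^ (2 * e : ℤ) := by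
    rw [← conj_mul, conj_wordS_zpow hs rfl, conj_wordS_zpow hs (fcomm_wordS_wordU hs),
      ← (hσ _ (wordU a t)).eq, ← mul_assoc, mul_inv_cancel_right, mul_assoc, ← zpow_add, two_mul]
  have hy_tu := inv_mul_mul_eq_of_commute (hyt.mul_right (commute_wordY_wordU hy hyt)).symm
  rw [inv_cube_mul_mul_cube e, inv_mul_mul_eq_mul_fcomm, inv_mul_mul_eq_mul_fcomm,
    fcomm_wordS_a_eq_zpow hs hy hyt, (hσ _ _).symm.mul_pow, ← zpow_natCast, ← zpow_natCast,
    ← zpow_mul, mul_inv_rev]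
  generalize hk : fcomm (wordS a t) t ^ (((e : ℤ) - 1) * e) = k
  have hkτ (x : E) : Commute (k * (fcomm (wordY e a t) a)⁻¹) x :=
    (hk ▸ hσ _ x).mul_left (hτ x)
  calc _ = wordS a t ^ (e : ℤ) * ((k * (fcomm (wordY e a t) a)⁻¹) * ((wordY e a t)⁻¹ *
          (t * wordU a t * wordY e a t * (wordS a t ^ (e : ℤ))⁻¹) * (wordU a t)⁻¹)) := by
        simp only [mul_assoc]
    _ = wordS a t ^ (e : ℤ) * ((wordY e a t)⁻¹ * (t * wordU a t) * wordY e a t) *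
          (wordS a t ^ (e : ℤ))⁻¹ * (wordU a t)⁻¹ * (k * (fcomm (wordY e a t) a)⁻¹) := by
        rw [(hkτ _).eq]
        simp only [mul_assoc]
    _ = _ := by
        rw [hy_tu, hstu, ← hk, mul_assoc t, ← mul_assoc (_ ^ _), ← zpow_add]
        ring_nf

/-- Conjugating `t` by `a³ = z * s⁻¹` in one step and in three steps gives two expressions for the
same element. -/
theorem fcomm_wordS_t_zpow_eq (hs : wordS a t ∈ nearCenter 3 E)
    (hy : wordY e a t ∈ nearCenter 3 E) (hyt : Commute (wordY e a t) t)
    (hzt : Commute (wordZ a t) t) :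
    fcomm (wordS a t) t ^ ((e : ℤ) * (e - 1) + 2 * e - 1) = fcomm (wordY e a t) a := by
  have hone : (a ^ 3)⁻¹ * t * a ^ 3 = t * fcomm (wordS a t) t :=
    calc (a ^ 3)⁻¹ * t * a ^ 3 = wordS a t * ((wordZ a t)⁻¹ * t * wordZ a t) * (wordS a t)⁻¹ := by
          rw [← wordZ_mul_wordS_inv a t]; group
      _ = t * fcomm (wordS a t) t := by
          simpa [inv_mul_mul_eq_of_commute hzt.symm] using conj_wordS_zpow hs rfl 1
  have hσ := mul_left_cancel ((inv_cube_mul_mul_cube_eq hs hy hyt).symm.trans hone)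
  rw [zpow_sub_one, mul_inv_eq_iff_eq_mul.1 hσ,
    (commute_fcomm_of_mem_nearCenter hs t _).eq, mul_inv_cancel_right]

theorem wordZ_pow_three_eq_one {k : ℕ} (hsa : Commute (wordS a t) a) (hst : Commute (wordS a t) t)
    (hzt : Commute (wordZ a t) t) (hw : wordW a t (k + 1) = (wordZ a t)⁻¹) :
    wordZ a t ^ 3 = 1 := by
  have hza : Commute (wordZ a t) a := ((Commute.refl a).pow_left 3).mul_left hsa
  have ha3 : Commute (wordW a t k) (a ^ 3) := by
    rw [← wordZ_mul_wordS_inv a t]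
    exact (commute_wordW (hza.mul_left hsa.inv_left) (hzt.mul_left hst.inv_left) k).symm
  rw [wordW] at hw
  have hpow := fcomm_zpow_right (hw ▸ hza.inv_left) 3
  rwa [hw, zpow_ofNat, zpow_ofNat, fcomm_eq_one_iff_commute.2 ha3, eq_comm, inv_pow,
    inv_eq_one] at hpow

theorem wordW_eq_inv_wordZ (hZ : relatorZ c a t = 1) : wordW a t (c - 1) = (wordZ a t)⁻¹ :=
  eq_inv_of_mul_eq_one_right hZ

theorem wordY_eq_inv_wordV_mul (hY : relatorY c e ℓ a t = 1) (hZ : relatorZ c a t = 1) :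
    wordY e a t = (wordV c a t)⁻¹ * wordZ a t ^ ℓ := by
  rw [relatorY, mul_assoc, wordW_eq_inv_wordZ hZ] at hY
  rw [eq_inv_of_mul_eq_one_left hY, mul_inv_rev, inv_zpow, inv_inv]

/-- The order of `[s,t]` divides both `3` and `(e - 1) * (e - 1 - ℓ) + 1`. -/
theorem fcomm_wordS_t_eq_one (hs : wordS a t ∈ nearCenter 3 E)
    (hy : wordY e a t ∈ nearCenter 3 E) (h : ¬ (3 : ℤ) ∣ ((e : ℤ) - 1) * (e - 1 - ℓ) + 1)
    (hyt : Commute (wordY e a t) t) (hzt : Commute (wordZ a t) t)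
    (hya : fcomm (wordY e a t) a = fcomm (wordS a t) a ^ ℓ) : fcomm (wordS a t) t = 1 := by
  by_contra hne
  have hσ := fcomm_wordS_t_zpow_eq hs hy hyt hzt
  rw [hya, fcomm_wordS_a_eq_zpow hs hy hyt, ← zpow_mul, ← mul_inv_eq_one, ← zpow_sub,
    ← orderOf_dvd_iff_zpow_eq_one,
    orderOf_eq_prime (fcomm_pow_eq_one_of_mem_nearCenter hs t) hne, Nat.cast_ofNat] at hσ
  refine h ((Int.dvd_add_right (Dvd.intro ((e : ℤ) - 1) rfl)).1 ?_)
  convert hσ using 1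
  ring

theorem qRelations_of_mem_nearCenter (h : ¬ (3 : ℤ) ∣ ((e : ℤ) - 1) * (e - 1 - ℓ) + 1)
    (hs : wordS a t ∈ nearCenter 3 E) (hy : wordY e a t ∈ nearCenter 3 E)
    (hz : wordZ a t ∈ nearCenter 3 E) (hY : relatorY (2 * n + 5) e ℓ a t = 1)
    (hZ : relatorZ (2 * n + 5) a t = 1) : QRelations (2 * n + 5) e ℓ a t := by
  have hw : wordW a t (2 * n + 4) = (wordZ a t)⁻¹ := wordW_eq_inv_wordZ hZ
  have hwc : wordW a t (2 * n + 4) ∈ nearCenter 3 E := hw ▸ inv_mem hz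
  have hzt : Commute (wordZ a t) t := Commute.inv_left_iff.1 (hw ▸ commute_wordW_t hs hy hwc)
  have hv := wordV_mem_torsionCenter hs hy hwc
  have hyv := wordY_eq_inv_wordV_mul hY hZ
  have hcomm {x : E} (hx : Commute (wordZ a t) x) : Commute (wordY e a t) x :=
    hyv ▸ (commute_of_mem_torsionCenter (inv_mem hv) x).mul_left (hx.zpow_left ℓ)
  have hya : fcomm (wordY e a t) a = fcomm (wordS a t) a ^ ℓ := by
    have hva : fcomm (wordV (2 * n + 5) a t)⁻¹ a = 1 :=
      fcomm_eq_one_iff_commute.2 (commute_of_mem_torsionCenter (inv_mem hv) a)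
    rw [hyv, fcomm_mul_left (hva ▸ Commute.one_left _), hva, one_mul,
      fcomm_zpow_left (commute_fcomm_of_mem_nearCenter hz _ _), fcomm_wordZ_a]
  have hσ : fcomm (wordS a t) t = 1 := fcomm_wordS_t_eq_one hs hy h (hcomm hzt) hzt hya
  have hst := fcomm_eq_one_iff_commute.1 hσ
  have hsa : Commute (wordS a t) a := by
    rw [← fcomm_eq_one_iff_commute, fcomm_wordS_a_eq_zpow hs hy (hcomm hzt), hσ, one_zpow]
  have hz3 := wordZ_pow_three_eq_one hsa hst hzt hw
  refine ⟨⟨hst, hsa, hcomm hzt, hcomm ?_, hzt, ?_, hz3⟩, hY, hZ⟩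
  · exact ((Commute.refl a).pow_left 3).mul_left hsa
  · rw [hyv, (commute_of_mem_torsionCenter (inv_mem hv) _).mul_pow, (inv_mem hv).2, one_mul,
      ← zpow_natCast, zpow_comm, zpow_natCast, hz3, one_zpow]

end Relators

section Abelian

variable {A : Type*} [CommGroup A] {e k : ℕ} {ℓ : ℤ} {a t : A}

theorem qRelations_iff_of_commGroup :
    QRelations (k + 2) e ℓ a t ↔ a ^ 3 = 1 ∧ t ^ 3 = 1 := by
  have hcomm (g h : A) : fcomm g h = 1 := fcomm_eq_one_iff_commute.2 (.all g h)
  have hu : wordU a t = t := inv_mul_mul_eq_of_commute (.all t a)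
  have hy : wordY e a t = (t ^ 3)⁻¹ := by
    rw [wordY, wordS, hcomm, one_pow, mul_one, hu, inv_mul_mul_eq_of_commute (.all t a), pow_succ,
      pow_two]
  have hz : wordZ a t = a ^ 3 := by rw [wordZ, wordS, hcomm, mul_one]
  have hw : wordW a t (k + 1) = 1 := hcomm _ _
  have hY : relatorY (k + 2) e ℓ a t = (t ^ 3)⁻¹ := by
    rw [relatorY, hy, wordV, hcomm, Nat.add_succ_sub_one, hw, one_zpow, mul_one, mul_one]
  have hZ : relatorZ (k + 2) a t = a ^ 3 := by
    rw [relatorZ, hz, Nat.add_succ_sub_one, hw, mul_one]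
  refine ⟨fun h => ⟨hZ ▸ h.relatorZ_eq_one, inv_eq_one.1 (hY ▸ h.relatorY_eq_one)⟩,
    fun ⟨ha, ht⟩ => ⟨⟨.all _ _, .all _ _, .all _ _, .all _ _, .all _ _, ?_, ?_⟩, ?_, ?_⟩⟩
  · rw [hy, ht, inv_one, one_pow]
  · rw [hz, ha, one_pow]
  · rw [hY, ht, inv_one]
  · rw [hZ, ha]

end Abelian

section Cohomology

open CocycleExt groupCohomology

variable {n e k : ℕ} {ℓ : ℤ}

theorem exists_hom_genQ_eq {A : Type*} [CommGroup A] (hA : ∀ x : A, x ^ 3 = 1) (y : Fin 2 → A) :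
    ∃ φ : Qgrp (k + 2) e ℓ →* A, ∀ i, φ (genQ (k + 2) e ℓ i) = y i := by
  obtain ⟨φ, h₀, h₁⟩ := exists_hom_of_qRelations (c := k + 2) (e := e) (ℓ := ℓ)
    (qRelations_iff_of_commGroup.2 ⟨hA (y 0), hA (y 1)⟩)
  exact ⟨φ, Fin.forall_fin_two.2 ⟨h₀, h₁⟩⟩

theorem finrank_H1_Qgrp (k e : ℕ) (ℓ : ℤ) : Module.finrank (ZMod 3)
    (groupCohomology (Rep.trivial (ZMod 3) (Qgrp (k + 2) e ℓ) (ZMod 3)) 1) = 2 :=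
  (finrank_H1_eq_card (closure_range_genQ (k + 2) e ℓ)
    (exists_hom_genQ_eq fun x => by revert x; decide)).trans (Fintype.card_fin 2)

theorem monoidHom_pow_three_eq_one {A : Type*} [CommGroup A] (φ : Qgrp (k + 2) e ℓ →* A) :
    φ ^ 3 = 1 := by
  obtain ⟨ha, ht⟩ := qRelations_iff_of_commGroup.1 ((qRelations_genQ (k + 2) e ℓ).map φ)
  exact MonoidHom.eq_of_eqOn_dense (closure_range_genQ _ _ _)
    (Set.eqOn_range.2 (funext (Fin.forall_fin_two.2 ⟨ha, ht⟩)))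

theorem finrank_H1_le_finrank_H2_Qgrp
    [Module.Finite (ZMod 3)
      (groupCohomology (Rep.trivial (ZMod 3) (Qgrp (k + 2) e ℓ) (ZMod 3)) 2)] :
    Module.finrank (ZMod 3)
        (groupCohomology (Rep.trivial (ZMod 3) (Qgrp (k + 2) e ℓ) (ZMod 3)) 1) ≤
      Module.finrank (ZMod 3)
        (groupCohomology (Rep.trivial (ZMod 3) (Qgrp (k + 2) e ℓ) (ZMod 3)) 2) :=
  finrank_H1_le_finrank_H2 fun ψ => AddMonoidHom.toMultiplicativeRight.injective
    (monoidHom_pow_three_eq_one (AddMonoidHom.toMultiplicativeRight ψ))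

theorem qRelations_of_base_eq_genQ (h : ¬ (3 : ℤ) ∣ ((e : ℤ) - 1) * (e - 1 - ℓ) + 1)
    {f : cocycles₂ (Rep.trivial (ZMod 3) (Qgrp (2 * n + 5) e ℓ) (ZMod 3))} {a t : CocycleExt f}
    (ha : a.base = genQ _ e ℓ 0) (ht : t.base = genQ _ e ℓ 1)
    (hY : relatorY (2 * n + 5) e ℓ a t = 1) (hZ : relatorZ (2 * n + 5) a t = 1) :
    QRelations (2 * n + 5) e ℓ a t := by
  have hQ := qRelations_genQ (2 * n + 5) e ℓ
  rw [← ha, ← ht] at hQ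
  have hcenter {x : CocycleExt f} (hxa : Commute x.base a.base) (hxt : Commute x.base t.base) :
      x ∈ nearCenter 3 (CocycleExt f) :=
    mem_nearCenter_of_base_mem_center 3 (mem_center_of_commute_genQ (ha ▸ hxa) (ht ▸ hxt))
  have hs : (wordS a t).base = wordS a.base t.base := map_wordS (proj f) a t
  have hy : (wordY e a t).base = wordY e a.base t.base := map_wordY (proj f) a t e
  have hz : (wordZ a t).base = wordZ a.base t.base := map_wordZ (proj f) a t
  exact qRelations_of_mem_nearCenter h (hcenter (hs ▸ hQ.commute_s_a) (hs ▸ hQ.commute_s_t))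
    (hcenter (hy ▸ hQ.commute_y_a) (hy ▸ hQ.commute_y_t))
    (hcenter (hz ▸ hQ.commute_z_a) (hz ▸ hQ.commute_z_t)) hY hZ

theorem finite_and_finrank_H2_Qgrp_le_two (n : ℕ)
    (h : ¬ (3 : ℤ) ∣ ((e : ℤ) - 1) * (e - 1 - ℓ) + 1) :
    Module.Finite (ZMod 3)
        (groupCohomology (Rep.trivial (ZMod 3) (Qgrp (2 * n + 5) e ℓ) (ZMod 3)) 2) ∧
      Module.finrank (ZMod 3)
        (groupCohomology (Rep.trivial (ZMod 3) (Qgrp (2 * n + 5) e ℓ) (ZMod 3)) 2) ≤ 2 := by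
  let r : Fin 2 → FreeGroup (Fin 2) :=
    ![relatorY (2 * n + 5) e ℓ (.of 0) (.of 1), relatorZ (2 * n + 5) (.of 0) (.of 1)]
  refine finite_and_finrank_H2_le_card (closure_range_genQ (2 * n + 5) e ℓ) (r := r)
    (Fin.forall_fin_two.2 ⟨?_, ?_⟩) fun f hf => ?_
  · simpa [r, map_relatorY] using (qRelations_genQ (2 * n + 5) e ℓ).relatorY_eq_one
  · simpa [r, map_relatorZ] using (qRelations_genQ (2 * n + 5) e ℓ).relatorZ_eq_one
  · have hbase (i : Fin 2) : (freeLift (genQ _ e ℓ) f (.of i)).base = genQ _ e ℓ i := by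
      rw [base_freeLift, FreeGroup.lift_apply_of]
    have hY := hf 0
    have hZ := hf 1
    simp only [r, Matrix.cons_val, map_relatorY, map_relatorZ] at hY hZ
    obtain ⟨φ, h₀, h₁⟩ :=
      exists_hom_of_qRelations (qRelations_of_base_eq_genQ h (hbase 0) (hbase 1) hY hZ)
    exact ⟨φ, Fin.forall_fin_two.2 ⟨h₀, h₁⟩⟩

end Cohomology

end CoverLimitDef

theorem Qgrp_balanced_presentation_general (n e : ℕ) (ℓ : ℤ)
    (h : ¬ (3 : ℤ) ∣ ((e : ℤ) - 1) * (e - 1 - ℓ) + 1) :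
    Module.finrank (ZMod 3)
      (groupCohomology (Rep.trivial (ZMod 3) (Qgrp (2 * n + 5) e ℓ) (ZMod 3)) 1) = 2 ∧
    Module.finrank (ZMod 3)
      (groupCohomology (Rep.trivial (ZMod 3) (Qgrp (2 * n + 5) e ℓ) (ZMod 3)) 2) = 2 := by
  obtain ⟨_, hle⟩ := finite_and_finrank_H2_Qgrp_le_two n h
  have hH1 := finrank_H1_Qgrp (2 * n + 3) e ℓ
  exact ⟨hH1, hle.antisymm (hH1.symm.trans_le finrank_H1_le_finrank_H2_Qgrp)⟩

theorem Qgrp_balanced_presentation (n : ℕ) (e : ℕ) (ℓ : ℤ)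
    (h : (e, ℓ) ∈ ({(0, 0), (0, -1), (1, 0), (1, -1), (1, 1)} : Set (ℕ × ℤ))) :
    Module.finrank (ZMod 3)
      (groupCohomology
        (Rep.trivial (ZMod 3) (Qgrp (2 * n + 5) e ℓ) (ZMod 3)) 1) = 2 ∧
    Module.finrank (ZMod 3)
      (groupCohomology
        (Rep.trivial (ZMod 3) (Qgrp (2 * n + 5) e ℓ) (ZMod 3)) 2) = 2 := by
  refine Qgrp_balanced_presentation_general n e ℓ ?_
  simp only [Set.mem_insert_iff, Set.mem_singleton_iff, Prod.mk.injEq] at h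
  rcases h with ⟨rfl, rfl⟩ | ⟨rfl, rfl⟩ | ⟨rfl, rfl⟩ | ⟨rfl, rfl⟩ | ⟨rfl, rfl⟩ <;> decide
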